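/- For every real x with 0 < x ≤ 1, Σ_{n=1}^∞ (2n choose n) x^{2n} / (4ⁿ (2n+1)²) = log(2x)·arcsin(x)/x + (1/(4 i x)) · (Li₂(e^{2 i arcsin(x)}) − Li₂(e^{−2 i arcsin(x)})) − 1 (as complex numbers; both sides are in fact real). -/

import Mathlib

/-- The complex polylogarithm `Li_s(z) = Σ_{n≥1} zⁿ/n^s`. -/
noncomputable def cLi (s : ℕ) (z : ℂ) : ℂ := ∑' n : ℕ, z ^ (n + 1) / ((n : ℂ) + 1) ^ s

open Filter Topology Set

lemma cb_poch (n : ℕ) : (descPochhammer ℤ n).smeval (-1/2 : ℝ)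
    = (-1) ^ n * (n.factorial : ℝ) * (Nat.centralBinom n : ℝ) / 4 ^ n := by
  induction n with
  | zero => simp
  | succ n ih =>
    have h1 : (descPochhammer ℤ (n+1)).smeval (-1/2 : ℝ)
        = (descPochhammer ℤ n).smeval (-1/2 : ℝ) * (-1/2 - n) := by
      simp [descPochhammer_succ_right, Polynomial.smeval_mul, Polynomial.smeval_natCast]
    have h2 : ((n:ℝ)+1) * (Nat.centralBinom (n+1) : ℝ) = 2 * (2*n+1) * Nat.centralBinom n := by
      exact_mod_cast Nat.succ_mul_centralBinom_succ n
    rw [h1, ih, Nat.factorial_succ]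
    push_cast
    have : (-1:ℝ) ^ (n+1) * (((n:ℝ)+1) * n.factorial) * (Nat.centralBinom (n+1) : ℝ) / 4^(n+1)
      = (-1)^(n+1) * n.factorial * (2 * (2*n+1) * Nat.centralBinom n) / 4^(n+1) := by
      rw [← h2]; ring
    rw [this]
    field_simp
    ring

lemma cb_choose (n : ℕ) : Ring.choose (-1/2 : ℝ) n
    = (-1) ^ n * (Nat.centralBinom n : ℝ) / 4 ^ n := by
  have h := Ring.descPochhammer_eq_factorial_smul_choose (-1/2 : ℝ) n
  rw [cb_poch, nsmul_eq_mul] at h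
  have : (n.factorial : ℝ) ≠ 0 := by positivity
  apply mul_left_cancel₀ this
  rw [← h]; ring

lemma cb_hasSum {x : ℝ} (hx : |x| < 1) :
    HasSum (fun n : ℕ => (Nat.centralBinom n : ℝ) / 4 ^ n * x ^ (2 * n)) (1 / √(1 - x ^ 2)) := by
  have h1 : x ^ 2 < 1 := by rwa [sq_lt_one_iff_abs_lt_one]
  have h := (Real.one_add_rpow_hasFPowerSeriesOnBall_zero (a := -1/2)).hasSum (y := -x^2) (by
    rw [← ENNReal.ofReal_one, Metric.eball_ofReal]
    simpa using h1)
  have e1 : (fun n : ℕ => (Nat.centralBinom n : ℝ) / 4 ^ n * x ^ (2 * n))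
      = fun n : ℕ => (binomialSeries ℝ (-1/2 : ℝ) n) fun _ => -x ^ 2 := by
    ext n
    rw [binomialSeries_apply, cb_choose]
    simp only [List.ofFn_const, List.prod_replicate, smul_eq_mul]
    rw [show (-x^2)^n = (-1)^n * x^(2*n) by rw [neg_pow, pow_mul]]
    have : ((-1:ℝ)^n) * (-1)^n = 1 := by rw [← mul_pow]; simp
    linear_combination (-(Nat.centralBinom n : ℝ) / 4 ^ n * x ^ (2 * n)) * this
  have e2 : 1 / √(1 - x ^ 2) = (1 + (0 + -x ^ 2)) ^ (-1/2 : ℝ) := by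
    rw [Real.sqrt_eq_rpow, one_div, ← Real.rpow_neg (by linarith)]
    norm_num [sub_eq_add_neg]
  rw [e1, e2]
  exact h

lemma cb_le (n : ℕ) : (Nat.centralBinom n : ℝ) / 4 ^ n ≤ 1 := by
  rw [div_le_one (by positivity)]
  have h1 : Nat.centralBinom n ≤ 2 ^ (2*n) := by
    rw [Nat.centralBinom, ← Nat.sum_range_choose]
    exact Finset.single_le_sum (f := fun m => (2*n).choose m) (fun _ _ => Nat.zero_le _) (by simp; omega)
  rw [pow_mul] at h1
  exact_mod_cast h1

lemma cb_nonneg (n : ℕ) : (0:ℝ) ≤ (Nat.centralBinom n : ℝ) / 4 ^ n := by positivity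

/-- The arcsine series. -/
noncomputable def asT (x : ℝ) : ℝ :=
  ∑' n : ℕ, (Nat.centralBinom n : ℝ) / 4 ^ n * (x ^ (2 * n + 1) / (2 * n + 1))

/-- The main series multiplied by `x`. -/
noncomputable def asS (x : ℝ) : ℝ :=
  ∑' n : ℕ, (Nat.centralBinom n : ℝ) / 4 ^ n * (x ^ (2 * n + 1) / (2 * n + 1) ^ 2)

lemma geo_summable {r : ℝ} (hr0 : 0 ≤ r) (hr : r < 1) : Summable (fun n : ℕ => r ^ (2 * n)) := by
  simp_rw [pow_mul]
  exact summable_geometric_of_lt_one (by positivity) (by nlinarith)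

lemma asT_deriv {x : ℝ} (hx : |x| < 1) : HasDerivAt asT (1 / √(1 - x ^ 2)) x := by
  obtain ⟨r, hxr, hr⟩ := exists_between hx
  have hr0 : 0 ≤ r := (abs_nonneg x).trans hxr.le
  rw [← (cb_hasSum hx).tsum_eq]
  unfold asT
  apply hasDerivAt_tsum_of_isPreconnected (𝕜 := ℝ) (F := ℝ) (g' := fun (n : ℕ) (x : ℝ) => (Nat.centralBinom n : ℝ) / 4 ^ n * x ^ (2 * n)) (u := fun n : ℕ => r ^ (2 * n)) (t := Ioo (-r) r) (y₀ := 0)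
  · exact geo_summable hr0 hr
  · exact isOpen_Ioo
  · exact isPreconnected_Ioo
  · intro n y _
    have := ((hasDerivAt_pow (2*n+1) y).div_const (2*n+1 : ℝ)).const_mul ((Nat.centralBinom n : ℝ) / 4 ^ n)
    refine this.congr_deriv ?_
    push_cast
    have : (2*n+1 : ℝ) ≠ 0 := by positivity
    field_simp
  · intro n y hy
    rw [norm_mul, Real.norm_of_nonneg (cb_nonneg n), norm_pow]
    have : ‖y‖ ≤ r := (abs_lt.2 hy).le
    calc _ ≤ 1 * ‖y‖ ^ (2*n) := by gcongr; exact cb_le n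
      _ ≤ _ := by rw [one_mul]; gcongr
  · constructor <;> linarith [abs_nonneg x]
  · simp [summable_zero]
  · exact abs_lt.1 hxr

lemma asT_eq {x : ℝ} (h0 : 0 < x) (hx : x < 1) : asT x = Real.arcsin x := by
  have hd : ∀ y ∈ Icc 0 x, HasDerivAt (fun y => asT y - Real.arcsin y) 0 y := by
    intro y hy
    have h1 := asT_deriv (x := y) (by rw [abs_lt]; constructor <;> linarith [hy.1, hy.2])
    have h2 := Real.hasDerivAt_arcsin (x := y) (by linarith [hy.1]) (by linarith [hy.2])
    exact (h1.sub h2).congr_deriv (by simp)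
  obtain ⟨c, hc, h⟩ := exists_hasDerivAt_eq_slope (fun y => asT y - Real.arcsin y) (fun _ => 0) h0
    (fun y hy => (hd y hy).continuousAt.continuousWithinAt) (fun y hy => hd y ⟨hy.1.le, hy.2.le⟩)
  have h00 : asT 0 = 0 := by simp [asT]
  rw [eq_comm, div_eq_zero_iff] at h
  simp only [h00, Real.arcsin_zero] at h
  rcases h with h | h <;> linarith

lemma asS_deriv {x : ℝ} (h0 : 0 < x) (hx : x < 1) : HasDerivAt asS (Real.arcsin x / x) x := by
  obtain ⟨r, hxr, hr⟩ := exists_between hx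
  have hr0 : 0 ≤ r := h0.le.trans hxr.le
  have : Real.arcsin x / x = ∑' n : ℕ, (Nat.centralBinom n : ℝ) / 4 ^ n * (x ^ (2 * n) / (2 * n + 1)) := by
    rw [← asT_eq h0 hx, asT, ← tsum_div_const]
    congr 1; ext n; field_simp; ring
  rw [this]
  unfold asS
  apply hasDerivAt_tsum_of_isPreconnected (𝕜 := ℝ) (F := ℝ) (g' := fun (n : ℕ) (x : ℝ) => (Nat.centralBinom n : ℝ) / 4 ^ n * (x ^ (2 * n) / (2 * n + 1))) (u := fun n : ℕ => r ^ (2 * n)) (t := Ioo (-r) r) (y₀ := 0)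
  · exact geo_summable hr0 hr
  · exact isOpen_Ioo
  · exact isPreconnected_Ioo
  · intro n y _
    have := ((hasDerivAt_pow (2*n+1) y).div_const ((2*n+1)^2 : ℝ)).const_mul ((Nat.centralBinom n : ℝ) / 4 ^ n)
    refine this.congr_deriv ?_
    push_cast
    have : (2*n+1 : ℝ) ≠ 0 := by positivity
    field_simp
  · intro n y hy
    rw [norm_mul, Real.norm_of_nonneg (cb_nonneg n), norm_div, norm_pow, Real.norm_of_nonneg (by positivity : (0:ℝ) ≤ 2 * n + 1)]
    have : ‖y‖ ≤ r := (abs_lt.2 hy).le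
    calc _ ≤ 1 * (‖y‖ ^ (2*n) / 1) := by
            gcongr
            · exact cb_le n
            · linarith [(Nat.cast_nonneg n : (0:ℝ) ≤ n)]
      _ ≤ _ := by rw [one_mul, div_one]; gcongr
  · constructor <;> linarith
  · simp [summable_zero]
  · constructor <;> linarith

lemma sq_summable : Summable (fun n : ℕ => 1 / ((n:ℝ) + 1) ^ 2) := by
  have := (summable_nat_add_iff 1).2 (Real.summable_one_div_nat_pow.2 (one_lt_two))
  simpa using this

lemma asS_term_bound {x : ℝ} (hx : |x| ≤ 1) (n : ℕ) :
    ‖(Nat.centralBinom n : ℝ) / 4 ^ n * (x ^ (2 * n + 1) / (2 * n + 1) ^ 2)‖ ≤ 1 / ((n:ℝ) + 1) ^ 2 := by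
  rw [norm_mul, Real.norm_of_nonneg (cb_nonneg n), norm_div, norm_pow, Real.norm_of_nonneg (by positivity : (0:ℝ) ≤ (2 * n + 1)^2)]
  calc _ ≤ 1 * (1 / ((n:ℝ)+1)^2) := by
        gcongr
        · exact cb_le n
        · exact pow_le_one₀ (norm_nonneg _) hx
        · linarith [(Nat.cast_nonneg n : (0:ℝ) ≤ n)]
    _ = _ := one_mul _

lemma asS_cont : ContinuousOn asS (Icc (-1) 1) := by
  apply continuousOn_tsum (u := fun n : ℕ => 1 / ((n:ℝ) + 1) ^ 2)
  · intro n; fun_prop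
  · exact sq_summable
  · intro n x hx
    exact asS_term_bound (abs_le.2 hx) n

lemma cLi_term_bound {z : ℂ} (hz : ‖z‖ ≤ 1) (n : ℕ) :
    ‖z ^ (n + 1) / ((n : ℂ) + 1) ^ 2‖ ≤ 1 / ((n:ℝ) + 1) ^ 2 := by
  rw [norm_div, norm_pow, norm_pow]
  have : ‖(n:ℂ) + 1‖ = n + 1 := by
    have := Complex.norm_natCast (n+1)
    push_cast at this; exact this
  rw [this]
  gcongr
  exact pow_le_one₀ (norm_nonneg _) hz

lemma cLi_cont : ContinuousOn (cLi 2) (Metric.closedBall 0 1) := by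
  apply continuousOn_tsum (u := fun n : ℕ => 1 / ((n:ℝ) + 1) ^ 2)
  · intro n; fun_prop
  · exact sq_summable
  · intro n z hz
    exact cLi_term_bound (by simpa using hz) n

lemma norm_rexp (r t : ℝ) (hr : 0 ≤ r) : ‖(r:ℂ) * Complex.exp (t * Complex.I)‖ = r := by
  rw [norm_mul, Complex.norm_exp_ofReal_mul_I, mul_one, Complex.norm_of_nonneg hr]

lemma cLi_deriv_r {r : ℝ} (hr0 : 0 ≤ r) (hr : r < 1) (t : ℝ) :
    HasDerivAt (fun t : ℝ => cLi 2 (r * Complex.exp (t * Complex.I)))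
      (-Complex.I * Complex.log (1 - r * Complex.exp (t * Complex.I))) t := by
  have hn : ‖(r:ℂ) * Complex.exp (t * Complex.I)‖ < 1 := by rwa [norm_rexp _ _ hr0]
  have hs := (hasSum_nat_add_iff' 1).2 (Complex.hasSum_taylorSeries_neg_log hn)
  have hs2 := (hs.mul_left Complex.I).tsum_eq
  simp only [Finset.range_one, Finset.sum_singleton, pow_zero, Nat.cast_zero, div_zero, sub_zero, mul_neg] at hs2
  rw [neg_mul, ← hs2]
  unfold cLi
  apply hasDerivAt_tsum (𝕜 := ℝ) (g' := fun (n : ℕ) (t : ℝ) => Complex.I * (((r:ℂ) * Complex.exp (t * Complex.I)) ^ (n + 1) / ((n + 1 : ℕ) : ℂ))) (u := fun n : ℕ => r ^ (n+1)) (y₀ := 0)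
  · exact (summable_nat_add_iff 1).2 (summable_geometric_of_lt_one hr0 hr)
  · intro n y
    have h1 : HasDerivAt (fun y : ℝ => (r:ℂ) * Complex.exp (y * Complex.I)) ((r:ℂ) * (Complex.exp (y * Complex.I) * (1 * Complex.I))) y :=
      (((hasDerivAt_id (y:ℂ)).mul_const Complex.I).cexp.const_mul (r:ℂ)).comp_ofReal
    refine ((h1.pow (n+1)).div_const (((n:ℂ)+1)^2)).congr_deriv ?_
    have : (n:ℂ) + 1 ≠ 0 := by exact_mod_cast Nat.succ_ne_zero n
    push_cast
    field_simp
    try simp only [add_tsub_cancel_right]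
    try ring
  · intro n y
    rw [norm_mul, Complex.norm_I, one_mul, norm_div, norm_pow, norm_rexp _ _ hr0, Complex.norm_natCast]
    apply div_le_self (by positivity)
    simp
  · apply Summable.of_norm_bounded sq_summable
    intro n
    apply cLi_term_bound
    rw [norm_rexp _ _ hr0]; exact hr.le

lemma slit {r t : ℝ} (hr0 : 0 < r) (hr : r ≤ 1) (ht : t ∈ Ioo 0 Real.pi) :
    1 - (r:ℂ) * Complex.exp (t * Complex.I) ∈ Complex.slitPlane := by
  right
  have := Real.sin_pos_of_mem_Ioo ht
  rw [Complex.exp_mul_I, ← Complex.ofReal_cos, ← Complex.ofReal_sin]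
  simp
  exact ⟨hr0.ne', this.ne'⟩

lemma cLi_deriv_one {t : ℝ} (ht : t ∈ Ioo 0 Real.pi) :
    HasDerivAt (fun t : ℝ => cLi 2 (Complex.exp (t * Complex.I)))
      (-Complex.I * Complex.log (1 - Complex.exp (t * Complex.I))) t := by
  refine hasDerivAt_of_tendstoLocallyUniformlyOn (l := 𝓝[<] (1:ℝ)) (s := Ioo 0 Real.pi)
    (f := fun r t => cLi 2 ((r:ℂ) * Complex.exp ((t:ℝ) * Complex.I)))
    (f' := fun r t => -Complex.I * Complex.log (1 - (r:ℂ) * Complex.exp ((t:ℝ) * Complex.I)))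
    (g' := fun t => -Complex.I * Complex.log (1 - Complex.exp ((t:ℝ) * Complex.I)))
    isOpen_Ioo ?_ ?_ ?_ ht
  · rw [tendstoLocallyUniformlyOn_iff_filter]
    intro y hy
    rw [isOpen_Ioo.nhdsWithin_eq hy]
    rw [tendstoUniformlyOnFilter_iff_tendsto]
    have hc : ContinuousAt (fun p : ℝ × ℝ => -Complex.I * Complex.log (1 - (p.1:ℂ) * Complex.exp ((p.2:ℝ) * Complex.I))) (1, y) := by
      apply ContinuousAt.mul continuousAt_const
      apply ContinuousAt.clog
      · fun_prop
      · exact slit one_pos le_rfl hy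
    have hc1 : Tendsto (fun p : ℝ × ℝ => -Complex.I * Complex.log (1 - (p.1:ℂ) * Complex.exp ((p.2:ℝ) * Complex.I))) (𝓝[<] 1 ×ˢ 𝓝 y) (𝓝 (-Complex.I * Complex.log (1 - ((1:ℝ):ℂ) * Complex.exp ((y:ℝ) * Complex.I)))) := by
      refine hc.tendsto.mono_left ?_
      rw [nhds_prod_eq]
      exact Filter.prod_mono nhdsWithin_le_nhds le_rfl
    have hd : ContinuousAt (fun t : ℝ => -Complex.I * Complex.log (1 - Complex.exp ((t:ℝ) * Complex.I))) y := by
      apply ContinuousAt.mul continuousAt_const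
      apply ContinuousAt.clog
      · fun_prop
      · simpa using slit one_pos le_rfl hy
    have hd1 := hd.tendsto.comp (tendsto_snd (f := 𝓝[<] (1:ℝ)) (g := 𝓝 y))
    simp only [Complex.ofReal_one, one_mul] at hc1
    have := hd1.prodMk_nhds hc1
    exact this.mono_right (nhds_le_uniformity _)
  · filter_upwards [Ioo_mem_nhdsLT (zero_lt_one (α := ℝ))] with r hr y _
    exact cLi_deriv_r hr.1.le hr.2 y
  · intro y _
    have h1 := cLi_cont (Complex.exp (y * Complex.I)) (by simp [Complex.norm_exp_ofReal_mul_I])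
    refine h1.tendsto.comp (tendsto_nhdsWithin_iff.2 ⟨?_, ?_⟩)
    · have : ContinuousAt (fun r : ℝ => (r:ℂ) * Complex.exp (y * Complex.I)) 1 := by fun_prop
      have := this.tendsto.mono_left (nhdsWithin_le_nhds (s := Iio 1))
      simpa using this
    · filter_upwards [Ioo_mem_nhdsLT (zero_lt_one (α := ℝ))] with r hr
      rw [mem_closedBall_zero_iff, norm_rexp _ _ hr.1.le]
      exact hr.2.le

/-- Half the Clausen function at twice the angle. -/
noncomputable def halfCl (θ : ℝ) : ℝ := (cLi 2 (Complex.exp (((2 * θ : ℝ) : ℂ) * Complex.I))).im / 2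

lemma norm_one_sub {θ : ℝ} (h : θ ∈ Ioo 0 (Real.pi / 2)) :
    ‖1 - Complex.exp (((2 * θ : ℝ) : ℂ) * Complex.I)‖ = 2 * Real.sin θ := by
  have hs : 0 < Real.sin θ := Real.sin_pos_of_mem_Ioo ⟨h.1, by linarith [h.2, Real.pi_pos]⟩
  rw [Complex.exp_mul_I, ← Complex.ofReal_cos, ← Complex.ofReal_sin]
  rw [← sq_eq_sq₀ (norm_nonneg _) (by positivity), ← Complex.normSq_eq_norm_sq, Complex.normSq_apply]
  simp only [Complex.sub_re, Complex.sub_im, Complex.add_re, Complex.add_im, Complex.one_re, Complex.one_im, Complex.ofReal_re, Complex.ofReal_im, Complex.mul_re, Complex.mul_im, Complex.I_re, Complex.I_im]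
  rw [Real.cos_two_mul, Real.sin_two_mul]
  have := Real.sin_sq_add_cos_sq θ
  linear_combination (4 * Real.cos θ ^ 2 - 4) * this

lemma halfCl_deriv {θ : ℝ} (h : θ ∈ Ioo 0 (Real.pi / 2)) :
    HasDerivAt halfCl (- Real.log (2 * Real.sin θ)) θ := by
  have h1 := cLi_deriv_one (t := 2 * θ) ⟨by linarith [h.1], by linarith [h.2]⟩
  have h2 := HasDerivAt.scomp θ h1 ((hasDerivAt_id θ).const_mul 2)
  have h3 := (Complex.imCLM.hasFDerivAt.comp_hasDerivAt θ h2).div_const 2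
  refine h3.congr_deriv ?_
  rw [← norm_one_sub h, ← Complex.log_re]
  simp
  ring

lemma halfCl_cont : Continuous halfCl := by
  have : Continuous (fun θ : ℝ => cLi 2 (Complex.exp (((2 * θ : ℝ) : ℂ) * Complex.I))) := by
    apply cLi_cont.comp_continuous (by fun_prop)
    intro θ
    rw [mem_closedBall_zero_iff, Complex.norm_exp_ofReal_mul_I]
  exact (Complex.continuous_im.comp this).div_const 2

lemma cLi_one_im : (cLi 2 1).im = 0 := by
  have : cLi 2 1 = ((∑' n : ℕ, 1 / ((n:ℝ)+1)^2 : ℝ) : ℂ) := by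
    rw [cLi, Complex.ofReal_tsum]
    congr 1; ext n; simp
  rw [this, Complex.ofReal_im]

lemma cLi_conj (z : ℂ) : cLi 2 (starRingEnd ℂ z) = starRingEnd ℂ (cLi 2 z) := by
  rw [cLi, cLi, Complex.conj_tsum]
  congr 1; ext n; simp

lemma mullog_cont : ContinuousOn (fun θ : ℝ => θ * Real.log (2 * Real.sin θ)) (Icc 0 (Real.pi / 2)) := by
  have hpos : ∀ θ ∈ Icc 0 (Real.pi/2), 0 < Real.sinc θ := by
    intro θ hθ
    rcases hθ.1.eq_or_lt with h | h
    · rw [← h]; simp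
    · rw [Real.sinc_of_ne_zero h.ne']
      exact div_pos (Real.sin_pos_of_mem_Ioo ⟨h, by linarith [hθ.2, Real.pi_pos]⟩) h
  have : ContinuousOn (fun θ : ℝ => θ * Real.log θ + θ * Real.log (2 * Real.sinc θ)) (Icc 0 (Real.pi / 2)) := by
    apply Real.continuous_mul_log.continuousOn.add
    apply continuousOn_id.mul
    apply ContinuousOn.log
    · exact (continuous_const.mul Real.continuous_sinc).continuousOn
    · intro θ hθ; have := hpos θ hθ; positivity
  refine this.congr ?_
  intro θ hθ
  have hp := hpos θ hθ
  rcases hθ.1.eq_or_lt with h | h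
  · rw [← h]; simp
  · simp only
    rw [← mul_add, ← Real.log_mul h.ne' (by positivity), Real.sinc_of_ne_zero h.ne']
    congr 2; field_simp

lemma key {θ : ℝ} (h0 : 0 < θ) (h1 : θ ≤ Real.pi / 2) :
    asS (Real.sin θ) = θ * Real.log (2 * Real.sin θ) + halfCl θ := by
  have hpi := Real.pi_pos
  have hd : ∀ t ∈ Ioo 0 θ, HasDerivAt
      (fun t => asS (Real.sin t) - (t * Real.log (2 * Real.sin t) + halfCl t)) 0 t := by
    intro t ht
    have ht2 : t ∈ Ioo 0 (Real.pi / 2) := ⟨ht.1, ht.2.trans_le h1⟩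
    have hs : 0 < Real.sin t := Real.sin_pos_of_mem_Ioo ⟨ht.1, by linarith [ht2.2]⟩
    have hs1 : Real.sin t < 1 := by
      have := Real.sin_lt_sin_of_lt_of_le_pi_div_two (x := t) (y := Real.pi / 2)
        (by linarith [ht.1]) le_rfl ht2.2
      simpa using this
    have d1 := (asS_deriv hs hs1).comp t (Real.hasDerivAt_sin t)
    have d2 := ((Real.hasDerivAt_sin t).const_mul 2).log (by positivity)
    have d3 := ((hasDerivAt_id t).mul d2).add (halfCl_deriv ht2)
    refine (d1.sub d3).congr_deriv ?_
    rw [Real.arcsin_sin (by linarith [ht.1]) ht2.2.le]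
    simp only [id]
    field_simp
    ring
  have hc : ContinuousOn
      (fun t => asS (Real.sin t) - (t * Real.log (2 * Real.sin t) + halfCl t)) (Icc 0 θ) := by
    apply ContinuousOn.sub
    · exact asS_cont.comp Real.continuous_sin.continuousOn (fun t _ => Real.sin_mem_Icc t)
    · exact (mullog_cont.mono (Icc_subset_Icc le_rfl h1)).add halfCl_cont.continuousOn
  obtain ⟨c, hcc, h⟩ := exists_hasDerivAt_eq_slope _ (fun _ => 0) h0 hc hd
  have e1 : asS 0 = 0 := by simp [asS]
  have e2 : halfCl 0 = 0 := by simp [halfCl, cLi_one_im]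
  rw [eq_comm, div_eq_zero_iff] at h
  simp only [Real.sin_zero, e1, e2] at h
  rcases h with h | h <;> linarith

lemma lhs_eq {x : ℝ} (hx : 0 < x) (hx1 : x ≤ 1) :
    (∑' n : ℕ, (Nat.centralBinom (n + 1) : ℝ) * x ^ (2 * (n + 1))
        / (4 ^ (n + 1) * ((2 * (n + 1) + 1 : ℝ)) ^ 2) : ℝ) = asS x / x - 1 := by
  have hs : Summable (fun n : ℕ =>
      (Nat.centralBinom n : ℝ) / 4 ^ n * (x ^ (2 * n + 1) / (2 * n + 1) ^ 2) / x) := by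
    apply Summable.div_const
    apply Summable.of_norm_bounded sq_summable
    intro n
    exact asS_term_bound (by rwa [abs_of_pos hx]) n
  rw [asS, ← tsum_div_const, hs.tsum_eq_zero_add]
  simp only [Nat.centralBinom_zero, Nat.cast_one, pow_zero, Nat.cast_zero, mul_zero, zero_add,
    pow_one, one_pow, div_one, one_mul, div_self hx.ne', add_sub_cancel_left]
  congr 1
  ext n
  push_cast
  field_simp
  ring


/-- For `0 < x ≤ 1`,
`Σ_{n≥1} (2n choose n) x^{2n}/(4ⁿ(2n+1)²)
  = log(2x)·arcsin(x)/x + (1/(4ix))(Li₂(e^{2i arcsin x}) − Li₂(e^{−2i arcsin x})) − 1`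
as complex numbers. -/
theorem centralBinom_gf_sq (x : ℝ) (hx : 0 < x) (hx1 : x ≤ 1) :
    ((∑' n : ℕ, (Nat.centralBinom (n + 1) : ℝ) * x ^ (2 * (n + 1))
        / (4 ^ (n + 1) * ((2 * (n + 1) + 1 : ℝ)) ^ 2) : ℝ) : ℂ) =
      ((Real.log (2 * x) * Real.arcsin x / x : ℝ) : ℂ) +
        1 / (4 * Complex.I * (x : ℂ)) *
          (cLi 2 (Complex.exp (2 * Complex.I * ((Real.arcsin x : ℝ) : ℂ))) -
            cLi 2 (Complex.exp (-2 * Complex.I * ((Real.arcsin x : ℝ) : ℂ)))) - 1 := by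
  set θ := Real.arcsin x with hθ
  have hsin : Real.sin θ = x := Real.sin_arcsin (by linarith) hx1
  have hk := key (θ := θ) (Real.arcsin_pos.2 hx) (Real.arcsin_le_pi_div_two x)
  rw [hsin] at hk
  have hx0 : (x : ℂ) ≠ 0 := by exact_mod_cast hx.ne'
  have e1 : Complex.exp (2 * Complex.I * (θ : ℂ))
      = Complex.exp (((2 * θ : ℝ) : ℂ) * Complex.I) := by
    congr 1; push_cast; ring
  have e2 : Complex.exp (-2 * Complex.I * (θ : ℂ))
      = starRingEnd ℂ (Complex.exp (((2 * θ : ℝ) : ℂ) * Complex.I)) := by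
    rw [← Complex.exp_conj, map_mul, Complex.conj_I, Complex.conj_ofReal]
    congr 1; push_cast; ring
  have e3 : (cLi 2 (Complex.exp (((2 * θ : ℝ) : ℂ) * Complex.I))).im = 2 * halfCl θ := by
    unfold halfCl; ring
  rw [lhs_eq hx hx1, e1, e2, cLi_conj, Complex.sub_conj, e3, hk]
  push_cast
  have hI := Complex.I_ne_zero
  field_simp
  ring
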